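/- Let p be a prime and G = (ℤ/p)^n an elementary abelian p-group of rank n ≤ 2. If C is a non-acyclic perfect chain complex of 𝔽_p[G]-modules, then Σ_i dim_{𝔽_p} H_i(C) ≥ 2^n. -/

import Mathlib

/-! Statement 2: If `G = (ℤ/p)^n` with `n ≤ 2` and `C` is a non-acyclic perfect chain complex
of `𝔽_p[G]`-modules, then `Σ_i dim_{𝔽_p} H_i(C) ≥ 2^n`.

A chain complex of `𝔽_p[G]`-modules is encoded as a single `𝔽_p[G]`-module together with an
internal `ℤ`-grading and a square-zero differential of degree `-1`.  `Σ_i dim H_i(C)` is the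
`𝔽_p`-dimension of the total homology `ker d ⧸ im d`. -/

/-- The group algebra `k[(ℤ/p)ⁿ]`. -/
abbrev GroupRing (p n : ℕ) (k : Type) [Field k] : Type := AddMonoidAlgebra k (Fin n → ZMod p)

/-- A `ℤ`-graded `N`-complex of modules over the group algebra `k[(ℤ/p)ⁿ]`:
a module with an internal grading and a degree `-1` differential `d` with `d ^ N = 0`. -/
structure KGCx (p n : ℕ) (k : Type) [Field k] (N : ℕ) : Type 1 where
  X : Type
  [acg : AddCommGroup X]
  [modR : Module (GroupRing p n k) X]
  [modk : Module k X]
  [tower : IsScalarTower k (GroupRing p n k) X]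
  d : X →ₗ[GroupRing p n k] X
  gr : ℤ → Submodule (GroupRing p n k) X
  internal : DirectSum.IsInternal gr
  d_deg : ∀ m : ℤ, ∀ x ∈ gr m, d x ∈ gr (m - 1)
  d_pow : d ^ N = 0

attribute [instance] KGCx.acg KGCx.modR KGCx.modk KGCx.tower

namespace KGCx

variable {p n N : ℕ} {k : Type} [Field k] (C : KGCx p n k N)

/-- Perfect: the underlying graded module has a finite homogeneous basis over the group ring
(i.e. it is a bounded complex of finitely generated free modules). -/
def IsPerfect : Prop :=
  ∃ (ι : Type) (_ : Fintype ι) (deg : ι → ℤ) (b : Module.Basis ι (GroupRing p n k) C.X),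
    ∀ a, b a ∈ C.gr (deg a)

/-- Non-acyclic: the (total) homology is nonzero. -/
def NonAcyclic : Prop := ∃ x : C.X, C.d x = 0 ∧ x ∉ LinearMap.range C.d

/-- The differential as a `k`-linear map. -/
noncomputable def dk : C.X →ₗ[k] C.X := C.d.restrictScalars k

/-- The total homology `ker d ⧸ im d` as a `k`-vector space; its dimension is
`Σ_i dim_k H_i(C)`. -/
noncomputable abbrev TotalHomology : Type :=
  ↥(LinearMap.ker C.dk) ⧸ (LinearMap.range C.dk).comap (LinearMap.ker C.dk).subtype

end KGCx

section
variable {R : Type*} [CommRing R] (u v : R)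

/-- The `2`-periodic sequence `u, v, u, v, …`. -/
def altern (i : ℕ) : R := if Even i then u else v

theorem altern_succ_mul (h : u * v = 0) (i : ℕ) : altern u v (i + 1) * altern u v i = 0 := by
  unfold altern
  rcases Nat.even_or_odd i with hi | hi
  · rw [if_neg (by simpa [Nat.even_add_one] using hi), if_pos hi, mul_comm, h]
  · have : ¬ Even i := by simpa using hi
    rw [if_pos (by simpa [Nat.even_add_one] using hi), if_neg this, h]

variable (x N y L : R)

/-- The total coboundary from degree `n` to degree `n + 1` of the first-quadrant double complex
with all entries `M`, horizontal maps alternately `x` and `N`, vertical maps alternately `y` and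
`L`.  The entry `f i` of a degree `n` cochain sits in position `(i, n - i)`.  For the standard
operators of `k[(ℤ/p)²]` this complex computes group cohomology with coefficients in `M`. -/
def cobd {M : Type*} [AddCommGroup M] [Module R M] (n : ℕ) (f : ℕ → M) : ℕ → M
  | 0 => altern y L n • f 0
  | i + 1 => altern x N i • f i + ((-1) ^ (i + 1) * altern y L (n - (i + 1))) • f (i + 1)

/-- Sequences supported in `[0, n]`, that is, cochains of degree `n`. -/
def IsCochain {M : Type*} [AddCommGroup M] (n : ℕ) (f : ℕ → M) : Prop := ∀ i, n < i → f i = 0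

section
variable {M M' : Type*} [AddCommGroup M] [Module R M] [AddCommGroup M'] [Module R M']

theorem cobd_sub (n : ℕ) (f g : ℕ → M) :
    cobd x N y L n (f - g) = cobd x N y L n f - cobd x N y L n g := by
  funext i
  cases i <;> simp only [cobd, Pi.sub_apply, smul_sub]
  abel

theorem cobd_map (q : M →ₗ[R] M') (n : ℕ) (f : ℕ → M) :
    cobd x N y L n (fun i => q (f i)) = fun i => q (cobd x N y L n f i) := by
  funext i
  cases i <;> simp only [cobd, map_add, map_smul]

theorem IsCochain.cobd {n : ℕ} {f : ℕ → M} (hf : IsCochain n f) :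
    IsCochain (n + 1) (cobd x N y L n f) := by
  intro i hi
  obtain _ | i := i
  · omega
  · simp only [_root_.cobd]
    rw [hf i (by omega), hf (i + 1) (by omega)]
    simp

variable {x N y L}

theorem cobd_cobd (hx : x * N = 0) (hy : y * L = 0) {n : ℕ} {f : ℕ → M} (hf : IsCochain n f) :
    cobd x N y L (n + 1) (cobd x N y L n f) = 0 := by
  have hy' := altern_succ_mul y L hy
  have hx' := altern_succ_mul x N hx
  funext i
  match i with
  | 0 => simp [cobd, smul_smul, hy']
  | 1 =>
    simp only [cobd, smul_add, smul_smul, Pi.zero_apply]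
    rcases n with _ | n
    · rw [hf 1 (by omega)]
      simp only [smul_zero, add_zero, ← add_smul]
      convert zero_smul R (f 0) using 2
      simp; ring
    · have := hy' n
      simp only [Nat.add_sub_cancel, zero_add]
      have e : ((-1) ^ 1 * altern y L (n + 1)) * ((-1) ^ 1 * altern y L n) = 0 := by
        linear_combination this
      rw [e, zero_smul, add_zero, ← add_smul]
      convert zero_smul R (f 0) using 2
      ring
  | i + 2 =>
    simp only [cobd, smul_add, smul_smul, Pi.zero_apply, hx', zero_smul, zero_add]
    have e1 : n + 1 - (i + 1 + 1) = n - (i + 1) := by omega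
    rw [e1]
    have e2 : ((-1) ^ (i + 1 + 1) * altern y L (n - (i + 1)) *
        ((-1) ^ (i + 1 + 1) * altern y L (n - (i + 1 + 1)))) • f (i + 1 + 1) = 0 := by
      by_cases h : i + 2 ≤ n
      · have := hy' (n - (i + 1 + 1))
        rw [show n - (i + 1 + 1) + 1 = n - (i + 1) by omega] at this
        convert zero_smul R _ using 2
        linear_combination (-1) ^ (i + 1 + 1) * (-1) ^ (i + 1 + 1) * this
      · rw [hf _ (by omega), smul_zero]
    rw [e2, add_zero, ← add_smul]
    convert zero_smul R (f (i + 1)) using 2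
    ring

end

variable (M : Type*) [AddCommGroup M] [Module R M]

/-- The family `T` indexes cocycles representing every cohomology class of degree `n + 1`. -/
def HasReps (n : ℕ) (T : Type*) : Prop :=
  ∃ r : T → ℕ → M, (∀ t, IsCochain (n + 1) (r t) ∧ cobd x N y L (n + 1) (r t) = 0) ∧
    ∀ f : ℕ → M, IsCochain (n + 1) f → cobd x N y L (n + 1) f = 0 →
      ∃ t g, IsCochain n g ∧ f - r t = cobd x N y L n g

/-- Cohomology with coefficients in `M` vanishes in degree `n + 1`. -/
def Vanishes (n : ℕ) : Prop :=
  ∀ f : ℕ → M, IsCochain (n + 1) f → cobd x N y L (n + 1) f = 0 →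
    ∃ g, IsCochain n g ∧ f = cobd x N y L n g

/-- The rows of the double complex on `M` are exact away from the first column, and the complex
formed by the kernels of `x` is exact away from degree `0`. -/
structure DoublyExact : Prop where
  row : ∀ (i : ℕ) (v : M), altern x N (i + 1) • v = 0 → ∃ w, v = altern x N i • w
  col : ∀ (i : ℕ) (v : M), x • v = 0 → altern y L (i + 1) • v = 0 →
    ∃ w, x • w = 0 ∧ v = altern y L i • w

variable {M} {x N y L}

theorem IsCochain.sub {M : Type*} [AddCommGroup M] {n : ℕ} {f g : ℕ → M} (hf : IsCochain n f)
    (hg : IsCochain n g) : IsCochain n (f - g) := fun i hi => by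
  simp [hf i hi, hg i hi]

theorem IsCochain.single {M : Type*} [AddCommGroup M] {n i : ℕ} (h : i ≤ n) (w : M) :
    IsCochain n (Pi.single i w : ℕ → M) := fun j hj => by
  rw [Pi.single_eq_of_ne (by omega)]

theorem vanishes_iff {n : ℕ} : Vanishes x N y L M n ↔ HasReps x N y L M n Unit := by
  constructor
  · intro h
    refine ⟨fun _ => 0, fun _ => ⟨fun _ _ => rfl, ?_⟩, fun f hf hf' => ?_⟩
    · simpa using cobd_sub x N y L (n + 1) (0 : ℕ → M) 0
    · obtain ⟨g, hg, e⟩ := h f hf hf'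
      exact ⟨(), g, hg, by rw [sub_zero, e]⟩
  · rintro ⟨r, -, h⟩ f hf hf'
    obtain ⟨⟨⟩, g, hg, e⟩ := h f hf hf'
    obtain ⟨⟨⟩, g', hg', e'⟩ := h 0 (fun _ _ => rfl)
      (by simpa using cobd_sub x N y L (n + 1) (0 : ℕ → M) 0)
    refine ⟨g - g', hg.sub hg', ?_⟩
    rw [cobd_sub, ← e, ← e']
    abel

theorem vanishes_of_subsingleton [Subsingleton M] (n : ℕ) : Vanishes x N y L M n :=
  fun _ _ _ => ⟨0, fun _ _ => rfl, Subsingleton.elim _ _⟩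

theorem DoublyExact.vanishes (h : DoublyExact x N y L M) (hx : x * N = 0) (hy : y * L = 0)
    (n : ℕ) : Vanishes x N y L M n := by
  suffices H : ∀ t ≤ n + 1, ∀ f : ℕ → M, IsCochain t f → cobd x N y L (n + 1) f = 0 →
      ∃ g, IsCochain n g ∧ f = cobd x N y L n g from fun f hf => H _ le_rfl f hf
  intro t
  induction t with
  | zero =>
    intro _ f hf hf'
    have h0 := congrFun hf' 0
    have h1 := congrFun hf' 1
    simp only [cobd, hf 1 one_pos, smul_zero, add_zero, Pi.zero_apply] at h0 h1
    obtain ⟨w, hw, e⟩ := h.col n (f 0) (by simpa [altern] using h1) h0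
    refine ⟨Pi.single 0 w, .single (Nat.zero_le _) w, ?_⟩
    funext i
    match i with
    | 0 => simpa [cobd] using e
    | 1 => simp [cobd, hf 1 one_pos, altern, hw]
    | i + 2 => simp [cobd, hf (i + 2) (by omega)]
  | succ t ih =>
    intro ht f hf hf'
    have h1 := congrFun hf' (t + 2)
    simp only [cobd, hf (t + 1 + 1) (by omega), smul_zero, add_zero, Pi.zero_apply] at h1
    obtain ⟨w, e⟩ := h.row t _ h1
    have hw : IsCochain n (Pi.single t w : ℕ → M) := .single (by omega) w
    obtain ⟨g, hg, e'⟩ := ih (by omega) (f - cobd x N y L n (Pi.single t w)) (by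
        intro i hi
        obtain ⟨i, rfl⟩ : ∃ k, i = k + 1 := ⟨i - 1, by omega⟩
        rcases eq_or_ne i t with rfl | hit
        · simp [cobd, e]
        · simp [cobd, hf (i + 1) (by omega), Pi.single_eq_of_ne hit,
            Pi.single_eq_of_ne (show i + 1 ≠ t by omega)])
      (by rw [cobd_sub, hf', cobd_cobd hx hy hw, sub_zero])
    refine ⟨g - -Pi.single t w, hg.sub ?_, ?_⟩
    · intro i hi
      simp [hw i hi]
    · have := cobd_sub x N y L n 0 (Pi.single t w : ℕ → M)
      have h0 := cobd_sub x N y L n (0 : ℕ → M) 0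
      simp only [zero_sub, sub_self] at this h0
      rw [cobd_sub, this, h0, ← e']
      abel

section exact
variable {A Q : Type*} [AddCommGroup A] [Module R A] [AddCommGroup Q] [Module R Q]
  {j : A →ₗ[R] M} {q : M →ₗ[R] Q}

theorem IsCochain.exists_lift (hq : Function.Surjective q) {n : ℕ} {f : ℕ → Q}
    (hf : IsCochain n f) : ∃ g : ℕ → M, IsCochain n g ∧ (fun i => q (g i)) = f := by
  choose s hs using hq
  refine ⟨fun i => if n < i then 0 else s (f i), fun i hi => if_pos hi, ?_⟩
  funext i
  dsimp only
  split_ifs with hi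
  · rw [hf i hi, map_zero]
  · exact hs _

theorem IsCochain.exists_restrict (hj : Function.Injective j) (hjq : Function.Exact j q) {n : ℕ}
    {f : ℕ → M} (hf : IsCochain n f) (hf' : (fun i => q (f i)) = 0) :
    ∃ g : ℕ → A, IsCochain n g ∧ (fun i => j (g i)) = f := by
  choose g hg using fun i => (hjq (f i)).1 (congrFun hf' i)
  refine ⟨g, fun i hi => hj ?_, funext hg⟩
  rw [hg, hf i hi, map_zero]

variable {n : ℕ} {T : Type*}

theorem eq_of_map_eq (hj : Function.Injective j) {f g : ℕ → A}
    (h : (fun i => j (f i)) = fun i => j (g i)) : f = g :=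
  funext fun i => hj (congrFun h i)

theorem map_fun_sub (q : M →ₗ[R] Q) (f g : ℕ → M) :
    (fun i => q ((f - g) i)) = (fun i => q (f i)) - fun i => q (g i) := by
  funext i; simp

/-- The connecting map out of the cohomology of a quotient `Q` of `M` is onto when the cohomology
of `M` vanishes in the next degree. -/
theorem HasReps.connecting (hx : x * N = 0) (hy : y * L = 0) (hj : Function.Injective j)
    (hq : Function.Surjective q) (hjq : Function.Exact j q) (hM : Vanishes x N y L M (n + 1))
    (hQ : HasReps x N y L Q n T) : HasReps x N y L A (n + 1) T := by
  obtain ⟨r, hr, H⟩ := hQ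
  choose s hs hsr using fun t => (hr t).1.exists_lift hq
  have key : ∀ t, ∃ g : ℕ → A, IsCochain (n + 2) g ∧
      (fun i => j (g i)) = cobd x N y L (n + 1) (s t) := fun t =>
    ((hs t).cobd x N y L).exists_restrict hj hjq (by rw [← cobd_map, hsr, (hr t).2])
  choose a ha haj using key
  refine ⟨a, fun t => ⟨ha t, eq_of_map_eq hj ?_⟩, fun f hf hf' => ?_⟩
  · rw [← cobd_map, haj, cobd_cobd hx hy (hs t)]
    funext i; simp
  · obtain ⟨g, hg, e⟩ := hM (fun i => j (f i)) (fun i hi => by simp [hf i hi])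
      (by rw [cobd_map, hf']; funext i; simp)
    obtain ⟨t, h, hh, e'⟩ := H (fun i => q (g i)) (fun i hi => by simp [hg i hi]) (by
      rw [cobd_map, ← e]; funext i; exact hjq.apply_apply_eq_zero (f i))
    obtain ⟨h', hh', rfl⟩ := hh.exists_lift hq
    obtain ⟨z, hz, ez⟩ := IsCochain.exists_restrict (f := g - s t - cobd x N y L n h') hj hjq
      ((hg.sub (hs t)).sub (hh'.cobd x N y L)) (by
        rw [map_fun_sub, map_fun_sub, hsr, e', cobd_map, sub_self])
    refine ⟨t, z, hz, eq_of_map_eq hj ?_⟩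
    rw [map_fun_sub, haj, ← cobd_map, ez, cobd_sub, cobd_sub, cobd_cobd hx hy hh', sub_zero, e]

theorem HasReps.quotient (hx : x * N = 0) (hy : y * L = 0) (hj : Function.Injective j)
    (hq : Function.Surjective q) (hjq : Function.Exact j q) (hA : Vanishes x N y L A (n + 1))
    (hM : HasReps x N y L M n T) : HasReps x N y L Q n T := by
  obtain ⟨r, hr, H⟩ := hM
  refine ⟨fun t i => q (r t i), fun t => ⟨fun i hi => by simp [(hr t).1 i hi], ?_⟩,
    fun f hf hf' => ?_⟩
  · rw [cobd_map, (hr t).2]; funext i; simp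
  · obtain ⟨g, hg, rfl⟩ := hf.exists_lift hq
    obtain ⟨a, ha, ea⟩ := (hg.cobd x N y L).exists_restrict hj hjq (by rw [← cobd_map, hf'])
    obtain ⟨b, hb, rfl⟩ := hA a ha (eq_of_map_eq hj (by
      rw [← cobd_map, ea, cobd_cobd hx hy hg]; funext i; simp))
    obtain ⟨t, h, hh, e⟩ := H (g - fun i => j (b i)) (hg.sub fun i hi => by simp [hb i hi])
      (by rw [cobd_sub, cobd_map, ea, sub_self])
    refine ⟨t, fun i => q (h i), fun i hi => by simp [hh i hi], ?_⟩
    rw [cobd_map, ← e]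
    funext i
    simp [hjq.apply_apply_eq_zero]

end exact

section trivial

theorem cobd_eq_zero (h : ∀ v : M, x • v = 0 ∧ N • v = 0 ∧ y • v = 0 ∧ L • v = 0) (n : ℕ)
    (f : ℕ → M) : cobd x N y L n f = 0 := by
  have h1 : ∀ i (v : M), altern x N i • v = 0 := fun i v => by
    unfold altern; split_ifs <;> simp [h v]
  have h2 : ∀ i (v : M), altern y L i • v = 0 := fun i v => by
    unfold altern; split_ifs <;> simp [h v]
  funext i
  cases i <;> simp [cobd, h1, h2, mul_smul]

theorem hasReps_of_trivial (h : ∀ v : M, x • v = 0 ∧ N • v = 0 ∧ y • v = 0 ∧ L • v = 0) (n : ℕ) :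
    HasReps x N y L M n (Fin (n + 2) → M) := by
  refine ⟨fun t i => if hi : i < n + 2 then t ⟨i, hi⟩ else 0,
    fun t => ⟨fun i hi => dif_neg (by omega), cobd_eq_zero h _ _⟩,
    fun f hf _ => ⟨fun i => f i, 0, fun _ _ => rfl, ?_⟩⟩
  rw [cobd_eq_zero h]
  funext i
  by_cases hi : i < n + 2
  · simp [hi]
  · simp [hi, hf i (by omega)]

theorem HasReps.exists_surjective
    (h : ∀ v : M, x • v = 0 ∧ N • v = 0 ∧ y • v = 0 ∧ L • v = 0) {n : ℕ} {T : Type*}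
    (hT : HasReps x N y L M n T) : ∃ s : T → (Fin (n + 2) → M), Function.Surjective s := by
  obtain ⟨r, -, H⟩ := hT
  refine ⟨fun t i => r t i, fun f => ?_⟩
  obtain ⟨t, g, -, e⟩ := H (fun i => if hi : i < n + 2 then f ⟨i, hi⟩ else 0)
    (fun i hi => dif_neg (by omega)) (cobd_eq_zero h _ _)
  rw [cobd_eq_zero h, sub_eq_zero] at e
  refine ⟨t, funext fun i => ?_⟩
  simp [← e]

end trivial

theorem DoublyExact.of_basis {ι : Type*} [Finite ι] (b : Module.Basis ι R M)
    (h : DoublyExact x N y L R) : DoublyExact x N y L M := by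
  have := Fintype.ofFinite ι
  constructor
  · intro i v hv
    have hv' : ∀ a, altern x N (i + 1) • b.equivFun v a = 0 := fun a => by
      rw [← Pi.smul_apply, ← map_smul, hv]; simp
    choose w hw using fun a => h.row i _ (hv' a)
    refine ⟨b.equivFun.symm w, b.equivFun.injective ?_⟩
    rw [map_smul, LinearEquiv.apply_symm_apply]
    exact funext hw
  · intro i v hxv hv
    have hv' : ∀ a, altern y L (i + 1) • b.equivFun v a = 0 := fun a => by
      rw [← Pi.smul_apply, ← map_smul, hv]; simp
    have hxv' : ∀ a, x • b.equivFun v a = 0 := fun a => by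
      rw [← Pi.smul_apply, ← map_smul, hxv]; simp
    choose w hxw hw using fun a => h.col i _ (hxv' a) (hv' a)
    refine ⟨b.equivFun.symm w, ?_, b.equivFun.injective ?_⟩
    · rw [← map_smul, show x • w = 0 from funext hxw, map_zero]
    · rw [map_smul, LinearEquiv.apply_symm_apply]
      exact funext hw

end

section groupRing
open AddMonoidAlgebra Finset
variable {p n : ℕ} [Fact p.Prime] {k : Type} [Field k]

/-- The generator of the `c`-th factor of `(ℤ/p)ⁿ`, in the group algebra. -/
noncomputable def gen (p : ℕ) {n : ℕ} (k : Type) [Field k] (c : Fin n) : GroupRing p n k :=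
  single (Pi.single c 1) 1

/-- The norm element of the `c`-th factor of `(ℤ/p)ⁿ`. -/
noncomputable def normElt (p : ℕ) {n : ℕ} (k : Type) [Field k] (c : Fin n) : GroupRing p n k :=
  ∑ i ∈ range p, gen p k c ^ i

theorem gen_pow_card (c : Fin n) : gen p k c ^ p = 1 := by
  rw [gen, single_pow, one_pow, one_def]
  congr 1
  funext i
  simp

theorem gen_sub_one_mul_normElt (c : Fin n) : (gen p k c - 1) * normElt p k c = 0 := by
  rw [normElt, mul_geom_sum, gen_pow_card, sub_self]

theorem gen_mul_eq_iff (c : Fin n) (v : GroupRing p n k) :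
    gen p k c * v = v ↔ ∀ a, v.coeff (a - Pi.single c 1) = v.coeff a := by
  refine ⟨fun h a => ?_, fun h => ?_⟩
  · conv_rhs => rw [← h, gen, coeff_single_mul_apply, one_mul, neg_add_eq_sub]
  · refine AddMonoidAlgebra.ext (Finsupp.ext fun a => ?_)
    rw [gen, coeff_single_mul_apply, one_mul, neg_add_eq_sub, h]

theorem coeff_normElt_mul (c : Fin n) (v : GroupRing p n k) (a : Fin n → ZMod p) :
    (normElt p k c * v).coeff a =
      ∑ i ∈ range p, v.coeff (a - Pi.single c (i : ZMod p)) := by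
  rw [normElt, sum_mul, coeff_sum, Finsupp.finsetSum_apply]
  refine sum_congr rfl fun i _ => ?_
  rw [gen, single_pow, one_pow, coeff_single_mul_apply, one_mul, neg_add_eq_sub]
  congr 2
  funext j
  rcases eq_or_ne j c with rfl | h <;> simp [*]

theorem coeff_sub_natCast {c : Fin n} {v : GroupRing p n k} (hv : gen p k c * v = v)
    (a : Fin n → ZMod p) (i : ℕ) : v.coeff (a - Pi.single c (i : ZMod p)) = v.coeff a := by
  induction i with
  | zero => simp
  | succ i ih =>
    have h := (gen_mul_eq_iff c v).1 hv (a - Pi.single c (i : ZMod p))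
    rw [← ih, ← h, sub_sub, ← Pi.single_add, Nat.cast_succ]

theorem exists_normElt_mul {c : Fin n} {v : GroupRing p n k} (hv : gen p k c * v = v) :
    ∃ w, v = normElt p k c * w ∧ ∀ c', c' ≠ c → gen p k c' * v = v → gen p k c' * w = w := by
  refine ⟨ofCoeff (Finsupp.equivFunOnFinite.symm fun a => if a c = 0 then v.coeff a else 0),
    AddMonoidAlgebra.ext (Finsupp.ext fun a => ?_), fun c' hc hv' => ?_⟩
  · rw [coeff_normElt_mul]
    simp only [Finsupp.equivFunOnFinite_symm_apply_apply, coeff_sub_natCast hv,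
      Pi.sub_apply, Pi.single_eq_same]
    rw [sum_eq_single (a c).val]
    · simp
    · intro i hi hne
      refine if_neg fun h => hne ?_
      rw [sub_eq_zero.1 h, ZMod.val_natCast_of_lt (mem_range.1 hi)]
    · intro h
      exact absurd (mem_range.2 (ZMod.val_lt _)) h
  · rw [gen_mul_eq_iff] at hv' ⊢
    intro a
    simp [hv', Pi.single_eq_of_ne hc.symm]

theorem exists_gen_sub_one_mul {c : Fin n} {v : GroupRing p n k} (hv : normElt p k c * v = 0) :
    ∃ w, v = (gen p k c - 1) * w ∧
      ∀ c', c' ≠ c → gen p k c' * v = v → gen p k c' * w = w := by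
  have hp : 0 < p := (Fact.out : p.Prime).pos
  refine ⟨ofCoeff (Finsupp.equivFunOnFinite.symm fun a =>
      -∑ u ∈ range ((a c).val + 1), v.coeff (a - Pi.single c (u : ZMod p))),
    AddMonoidAlgebra.ext (Finsupp.ext fun a => ?_), fun c' hc hv' => ?_⟩
  · rw [sub_mul, one_mul, coeff_sub, Finsupp.sub_apply, gen, coeff_single_mul_apply, one_mul,
      neg_add_eq_sub]
    simp only [Finsupp.equivFunOnFinite_symm_apply_apply, Pi.sub_apply,
      Pi.single_eq_same]
    have step : ∀ u : ℕ, a - Pi.single c 1 - Pi.single c (u : ZMod p) =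
        a - Pi.single c ((u + 1 : ℕ) : ZMod p) := fun u => by
      rw [sub_sub, ← Pi.single_add, Nat.cast_succ, add_comm]
    by_cases h : a c = 0
    · have hs := congrArg (fun z => z.coeff (a - Pi.single c 1)) hv
      simp only [coeff_normElt_mul] at hs
      have e : (a c - 1).val + 1 = p := by
        rw [h, zero_sub]
        obtain ⟨q, rfl⟩ : ∃ q, p = q + 1 := ⟨p - 1, by omega⟩
        rw [ZMod.val_neg_one]
      rw [e, hs, h]
      simp
    · have e : (a c - 1).val + 1 = (a c).val := by
        have h1 : (a c).val ≠ 0 := by simpa using h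
        have h2 := ZMod.val_lt (a c)
        have : a c - 1 = (((a c).val - 1 : ℕ) : ZMod p) := by
          rw [Nat.cast_sub (by omega)]; simp
        rw [this, ZMod.val_natCast_of_lt (by omega)]
        omega
      rw [e, sum_range_succ' _ (a c).val]
      simp only [step]
      simp
  · rw [gen_mul_eq_iff] at hv' ⊢
    intro a
    have : ∀ u : ℕ, a - Pi.single c' 1 - Pi.single c (u : ZMod p) =
        a - Pi.single c (u : ZMod p) - Pi.single c' 1 := fun u => sub_right_comm _ _ _
    simp [hv', Pi.single_eq_of_ne hc.symm, this]

theorem doublyExact_groupRing {c c' : Fin n} (hc : c ≠ c') :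
    DoublyExact (gen p k c - 1) (normElt p k c) (gen p k c' - 1) (normElt p k c')
      (GroupRing p n k) := by
  have fix : ∀ (e : Fin n) (v : GroupRing p n k), (gen p k e - 1) • v = 0 ↔ gen p k e * v = v :=
    fun e v => by rw [smul_eq_mul, sub_mul, one_mul, sub_eq_zero]
  have one_var : ∀ (e : Fin n) (i : ℕ) (v : GroupRing p n k),
      altern (gen p k e - 1) (normElt p k e) (i + 1) • v = 0 →
      ∃ w, v = altern (gen p k e - 1) (normElt p k e) i • w ∧
        ∀ c', c' ≠ e → gen p k c' * v = v → gen p k c' * w = w := by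
    intro e i v hv
    unfold altern at hv ⊢
    rcases Nat.even_or_odd i with hi | hi
    · rw [if_neg (by simpa [Nat.even_add_one] using hi), smul_eq_mul] at hv
      simpa only [if_pos hi, smul_eq_mul] using exists_gen_sub_one_mul hv
    · have hi' : ¬ Even i := by simpa using hi
      rw [if_pos (by simpa [Nat.even_add_one] using hi), fix] at hv
      simpa only [if_neg hi', smul_eq_mul] using exists_normElt_mul hv
  refine ⟨fun i v hv => ?_, fun i v hxv hv => ?_⟩
  · obtain ⟨w, hw, -⟩ := one_var c i v hv
    exact ⟨w, hw⟩
  · obtain ⟨w, hw, H⟩ := one_var c' i v hv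
    exact ⟨w, (fix c w).2 (H c hc ((fix c v).1 hxv)), hw⟩

theorem finrank_groupRing : Module.finrank k (GroupRing p n k) = p ^ n := by
  rw [(coeffLinearEquiv k).finrank_eq, Module.finrank_finsupp_self]
  simp [ZMod.card]

/-- A one-dimensional module over `𝔽_p[(ℤ/p)ⁿ]` is trivial. -/
theorem gen_smul_of_finrank_eq_one {M : Type*} [AddCommGroup M] [Module (ZMod p) M]
    [Module (GroupRing p n (ZMod p)) M] [IsScalarTower (ZMod p) (GroupRing p n (ZMod p)) M]
    (h : Module.finrank (ZMod p) M = 1) (c : Fin n) (v : M) : gen p (ZMod p) c • v = v := by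
  obtain ⟨e, he, H⟩ := finrank_eq_one_iff'.1 h
  have sm : ∀ (a : ZMod p) (r : GroupRing p n (ZMod p)) (m : M), r • a • m = a • r • m :=
    fun a r m => by
      rw [← algebraMap_smul (GroupRing p n (ZMod p)) a m, smul_smul, mul_comm, ← smul_smul,
        algebraMap_smul]
  obtain ⟨a, ha⟩ := H (gen p (ZMod p) c • e)
  have hpow : ∀ i : ℕ, gen p (ZMod p) c ^ i • e = a ^ i • e := by
    intro i
    induction i with
    | zero => simp
    | succ i ih => rw [pow_succ', mul_smul, ih, sm, ← ha, smul_smul, pow_succ]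
  have h1 := hpow p
  rw [gen_pow_card, ZMod.pow_card, one_smul, ha] at h1
  obtain ⟨b, rfl⟩ := H v
  rw [sm, ← h1]

theorem normElt_smul_of_gen_smul {M : Type*} [AddCommGroup M] [Module (ZMod p) M]
    [Module (GroupRing p n (ZMod p)) M] {c : Fin n}
    {v : M} (h : gen p (ZMod p) c • v = v) : normElt p (ZMod p) c • v = 0 := by
  have hpow : ∀ i : ℕ, gen p (ZMod p) c ^ i • v = v := by
    intro i
    induction i with
    | zero => simp
    | succ i ih => rw [pow_succ', mul_smul, ih, h]
  rw [normElt, sum_smul, sum_congr rfl fun i _ => hpow i, sum_const, card_range,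
    ← Nat.cast_smul_eq_nsmul (ZMod p)]
  simp

end groupRing

theorem finrank_eq_add_of_exact {k R A M Q : Type*} [Field k] [Ring R] [Algebra k R]
    [AddCommGroup A] [AddCommGroup M] [AddCommGroup Q] [Module R A] [Module R M] [Module R Q]
    [Module k A] [Module k M] [Module k Q] [IsScalarTower k R A] [IsScalarTower k R M]
    [IsScalarTower k R Q] [Module.Finite k M] {j : A →ₗ[R] M} {q : M →ₗ[R] Q}
    (hj : Function.Injective j) (hq : Function.Surjective q) (hjq : Function.Exact j q) :
    Module.finrank k M = Module.finrank k A + Module.finrank k Q := by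
  have h := (q.restrictScalars k).finrank_range_add_finrank_ker
  have e : LinearMap.ker (q.restrictScalars k) = LinearMap.range (j.restrictScalars k) := by
    ext v
    simpa using hjq v
  rw [e, LinearMap.finrank_range_of_inj (f := j.restrictScalars k) hj,
    (LinearMap.range_eq_top (f := q.restrictScalars k)).2 hq, finrank_top] at h
  omega

theorem Finset.exists_eq_one_of_sum_eq_one {α : Type*} {F : Finset α} {f : α → ℕ}
    (h : ∑ i ∈ F, f i = 1) : ∃ a ∈ F, f a = 1 ∧ ∀ i ∈ F, i ≠ a → f i = 0 := by
  classical
  obtain ⟨a, ha, hfa⟩ := Finset.exists_ne_zero_of_sum_ne_zero (h.trans_ne one_ne_zero)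
  have h' := Finset.add_sum_erase F f ha
  have h0 : ∑ i ∈ F.erase a, f i = 0 := by omega
  exact ⟨a, ha, by omega,
    fun i hi hne => Finset.sum_eq_zero_iff.1 h0 i (Finset.mem_erase.2 ⟨hne, hi⟩)⟩

namespace KGCx
open Module Finset

section
variable {p n N : ℕ} {k : Type} [Field k] (C : KGCx p n k N)

/-- The projection onto the component of degree `i`. -/
noncomputable def proj (i : ℤ) : C.X →ₗ[GroupRing p n k] C.X :=
  letI := C.internal.chooseDecomposition
  (C.gr i).subtype ∘ₗ DirectSum.component (GroupRing p n k) ℤ (fun i => C.gr i) i ∘ₗ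
    (DirectSum.decomposeLinearEquiv C.gr).toLinearMap

theorem proj_mem (i : ℤ) (x : C.X) : C.proj i x ∈ C.gr i := Subtype.property _

variable {C}

theorem proj_of_mem {i : ℤ} {x : C.X} (hx : x ∈ C.gr i) : C.proj i x = x :=
  letI := C.internal.chooseDecomposition
  DirectSum.decompose_of_mem_same C.gr hx

theorem proj_of_mem_of_ne {i j : ℤ} {x : C.X} (hx : x ∈ C.gr i) (hij : i ≠ j) : C.proj j x = 0 :=
  letI := C.internal.chooseDecomposition
  DirectSum.decompose_of_mem_ne C.gr hx hij

variable (C) in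
/-- Cycles of degree `i`. -/
noncomputable def cyc (i : ℤ) : Submodule (GroupRing p n k) C.X := C.gr i ⊓ LinearMap.ker C.d

variable (C) in
/-- Boundaries of degree `i`. -/
noncomputable def bdy (i : ℤ) : Submodule (GroupRing p n k) C.X := C.gr i ⊓ LinearMap.range C.d

variable (C) in
/-- Homology in degree `i`. -/
abbrev Homology (i : ℤ) : Type := C.cyc i ⧸ (C.bdy i).submoduleOf (C.cyc i)

variable {ι : Type} {deg : ι → ℤ} (b : Basis ι (GroupRing p n k) C.X)
  (hb : ∀ a, b a ∈ C.gr (deg a))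

include b hb

theorem d_proj (i : ℤ) (x : C.X) : C.d (C.proj (i + 1) x) = C.proj i (C.d x) := by
  refine LinearMap.congr_fun (f := C.d ∘ₗ C.proj (i + 1)) (g := C.proj i ∘ₗ C.d)
    (b.ext fun a => ?_) x
  have hd := C.d_deg _ _ (hb a)
  rw [LinearMap.comp_apply, LinearMap.comp_apply]
  by_cases h : deg a = i + 1
  · rw [proj_of_mem (h ▸ hb a)]
    rw [h, add_sub_cancel_right] at hd
    rw [proj_of_mem hd]
  · rw [proj_of_mem_of_ne (hb a) h, proj_of_mem_of_ne hd (by omega), map_zero]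

theorem sum_proj {S : Finset ℤ} (hS : ∀ a, deg a ∈ S) (x : C.X) : ∑ i ∈ S, C.proj i x = x := by
  rw [← LinearMap.sum_apply]
  refine LinearMap.congr_fun (g := LinearMap.id) (b.ext fun a => ?_) x
  rw [LinearMap.sum_apply, sum_eq_single (deg a), proj_of_mem (hb a), LinearMap.id_apply]
  · exact fun i _ hi => proj_of_mem_of_ne (hb a) hi.symm
  · exact fun h => absurd (hS a) h

theorem gr_eq_span (i : ℤ) :
    C.gr i = Submodule.span _ (Set.range fun a : {a // deg a = i} => b a) := by
  apply le_antisymm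
  · have : LinearMap.range (C.proj i) ≤
        Submodule.span _ (Set.range fun a : {a // deg a = i} => b a) := by
      rw [LinearMap.range_eq_map, ← b.span_eq, Submodule.map_span, Submodule.span_le]
      rintro _ ⟨_, ⟨a, rfl⟩, rfl⟩
      by_cases h : deg a = i
      · rw [proj_of_mem (h ▸ hb a)]
        exact Submodule.subset_span ⟨⟨a, h⟩, rfl⟩
      · rw [proj_of_mem_of_ne (hb a) h]
        exact Submodule.zero_mem _
    exact fun x hx => this ⟨x, proj_of_mem hx⟩
  · rw [Submodule.span_le]
    rintro _ ⟨⟨a, rfl⟩, rfl⟩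
    exact hb a

theorem exists_basis_gr (i : ℤ) :
    Nonempty (Basis {a // deg a = i} (GroupRing p n k) (C.gr i)) := by
  have li : LinearIndependent (GroupRing p n k) fun a : {a // deg a = i} => b a :=
    b.linearIndependent.comp _ Subtype.val_injective
  exact ⟨(Basis.span li).map (LinearEquiv.ofEq _ _ (gr_eq_span b hb i).symm)⟩

theorem gr_eq_bot {i : ℤ} (hi : ∀ a, deg a ≠ i) : C.gr i = ⊥ := by
  rw [gr_eq_span b hb, Submodule.span_eq_bot]
  rintro _ ⟨⟨a, ha⟩, rfl⟩
  exact absurd ha (hi a)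

theorem finrank_eq_sum [Module.Finite k C.X] {S : Finset ℤ} (hS : ∀ a, deg a ∈ S)
    (U : Submodule (GroupRing p n k) C.X) (hU : ∀ i, ∀ x ∈ U, C.proj i x ∈ U) :
    finrank k U = ∑ i ∈ S, finrank k ↥(C.gr i ⊓ U) := by
  let f : U →ₗ[GroupRing p n k] (i : S) → ↥(C.gr i ⊓ U) := LinearMap.pi fun i =>
    ((C.proj i).comp U.subtype).codRestrict _ fun x => ⟨C.proj_mem i x, hU i x x.2⟩
  have hf : Function.Bijective f := by
    constructor
    · rw [injective_iff_map_eq_zero]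
      intro x hx
      refine Subtype.ext ?_
      rw [← sum_proj b hb hS (x : C.X)]
      exact sum_eq_zero fun i hi => congrArg Subtype.val (congrFun hx ⟨i, hi⟩)
    · intro y
      refine ⟨⟨∑ i, (y i : C.X), Submodule.sum_mem _ fun i _ => (y i).2.2⟩, ?_⟩
      funext i
      refine Subtype.ext ?_
      change C.proj i (∑ i, (y i : C.X)) = y i
      rw [map_sum, sum_eq_single i, proj_of_mem (y i).2.1]
      · exact fun j _ hj => proj_of_mem_of_ne (y j).2.1 fun h => hj (Subtype.ext h)
      · simp
  have (i : S) : Module.Finite k ↥(C.gr i ⊓ U) :=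
    inferInstanceAs (Module.Finite k ↥((C.gr i ⊓ U).restrictScalars k))
  rw [((LinearEquiv.ofBijective f hf).restrictScalars k).finrank_eq, finrank_pi_fintype,
    ← Finset.sum_coe_sort S]

/-- The differential as a surjection onto boundaries. -/
theorem exists_surjective_bdy (i : ℤ) : ∃ q : C.gr (i + 1) →ₗ[GroupRing p n k] C.bdy i,
    Function.Surjective q ∧
      Function.Exact (Submodule.inclusion (inf_le_left : C.cyc (i + 1) ≤ C.gr (i + 1))) q := by
  refine ⟨(C.d.comp (C.gr (i + 1)).subtype).codRestrict _ fun x =>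
    ⟨by simpa using C.d_deg _ _ x.2, ⟨_, rfl⟩⟩, ?_, fun x => ⟨fun h => ?_, ?_⟩⟩
  · rintro ⟨_, hy, x, rfl⟩
    refine ⟨⟨C.proj (i + 1) x, C.proj_mem _ _⟩, Subtype.ext ?_⟩
    change C.d (C.proj (i + 1) x) = _
    rw [d_proj b hb, proj_of_mem hy]
  · exact ⟨⟨x, x.2, congrArg Subtype.val h⟩, rfl⟩
  · rintro ⟨y, rfl⟩
    exact Subtype.ext y.2.2

end

section
variable {p n : ℕ} {k : Type} [Field k] {C : KGCx p n k 2}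

theorem d_d (x : C.X) : C.d (C.d x) = 0 := by
  have := LinearMap.congr_fun C.d_pow x
  rwa [pow_two] at this

theorem bdy_le_cyc (i : ℤ) : C.bdy i ≤ C.cyc i := by
  rintro _ ⟨h, x, rfl⟩
  exact ⟨h, d_d x⟩

theorem exact_homology (i : ℤ) : Function.Exact (Submodule.inclusion (bdy_le_cyc (C := C) i))
    ((C.bdy i).submoduleOf (C.cyc i)).mkQ := by
  intro x
  rw [Submodule.mkQ_apply, Submodule.Quotient.mk_eq_zero]
  exact ⟨fun h => ⟨⟨x, h⟩, rfl⟩, by rintro ⟨y, rfl⟩; exact y.2⟩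

theorem finrank_cyc [Module.Finite k C.X] (i : ℤ) :
    finrank k (C.cyc i) = finrank k (C.bdy i) + finrank k (C.Homology i) := by
  have : Module.Finite k (C.cyc i) :=
    inferInstanceAs (Module.Finite k ↥((C.cyc i).restrictScalars k))
  exact finrank_eq_add_of_exact (R := GroupRing p n k) (Submodule.inclusion_injective _)
    (Submodule.mkQ_surjective _) (exact_homology i)

theorem cyc_eq_bdy [Module.Finite k C.X] {i : ℤ} (h : finrank k (C.Homology i) = 0) :
    C.cyc i = C.bdy i := by
  have e : (C.bdy i).restrictScalars k = (C.cyc i).restrictScalars k :=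
    Submodule.eq_of_le_of_finrank_eq (bdy_le_cyc (C := C) i)
      (by have := finrank_cyc (C := C) (k := k) i; rw [h, add_zero] at this; exact this.symm)
  exact (Submodule.restrictScalars_injective k _ _ e).symm

theorem finrank_totalHomology [Module.Finite k C.X] :
    finrank k C.TotalHomology + finrank k (LinearMap.range C.d) =
      finrank k (LinearMap.ker C.d) := by
  have hle : LinearMap.range C.dk ≤ LinearMap.ker C.dk := by
    rintro _ ⟨x, rfl⟩
    exact d_d x
  have h := Submodule.finrank_quotient_add_finrank
    ((LinearMap.range C.dk).comap (LinearMap.ker C.dk).subtype)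
  rw [(Submodule.comapSubtypeEquivOfLe hle).finrank_eq] at h
  exact h

variable {ι : Type} {deg : ι → ℤ} (b : Basis ι (GroupRing p n k) C.X)
  (hb : ∀ a, b a ∈ C.gr (deg a))

include b hb

theorem finrank_gr [Module.Finite k C.X] (i : ℤ) : finrank k (C.gr (i + 1)) =
    finrank k (C.cyc (i + 1)) + finrank k (C.bdy i) := by
  have : Module.Finite k (C.gr (i + 1)) :=
    inferInstanceAs (Module.Finite k ↥((C.gr (i + 1)).restrictScalars k))
  obtain ⟨q, hq, hex⟩ := exists_surjective_bdy b hb i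
  exact finrank_eq_add_of_exact (Submodule.inclusion_injective _) hq hex

theorem finrank_totalHomology_eq_sum [Module.Finite k C.X] {S : Finset ℤ}
    (hS : ∀ a, deg a ∈ S) :
    finrank k C.TotalHomology = ∑ i ∈ S, finrank k (C.Homology i) := by
  have h := finrank_totalHomology (C := C)
  have hr : finrank k (LinearMap.range C.d) = ∑ i ∈ S, finrank k (C.bdy i) :=
    finrank_eq_sum b hb hS _ (by
      rintro i _ ⟨x, rfl⟩
      exact ⟨C.proj (i + 1) x, d_proj b hb i x⟩)
  have hk : finrank k (LinearMap.ker C.d) = ∑ i ∈ S, finrank k (C.cyc i) :=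
    finrank_eq_sum b hb hS _ (by
      intro i x hx
      obtain ⟨i, rfl⟩ : ∃ l, i = l + 1 := ⟨i - 1, by ring⟩
      rw [LinearMap.mem_ker] at hx ⊢
      rw [d_proj b hb, hx, map_zero])
  rw [hr, hk, sum_congr rfl fun i _ => finrank_cyc i, sum_add_distrib] at h
  omega

end
end KGCx

namespace KGCx
open Module Finset

/-- The Euler characteristic of a perfect complex is divisible by the order of the group. -/
theorem dvd_sum_homology {p n : ℕ} [Fact p.Prime] {k : Type} [Field k] {C : KGCx p n k 2}
    [Module.Finite k C.X] {ι : Type} [Finite ι] {deg : ι → ℤ} (b : Basis ι (GroupRing p n k) C.X)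
    (hb : ∀ a, b a ∈ C.gr (deg a)) {S : Finset ℤ} (hS : ∀ a, deg a ∈ S) :
    (p ^ n : ℤ) ∣ ∑ i ∈ S, (i.negOnePow : ℤ) * finrank k (C.Homology i) := by
  have hgr : ∀ i, (p ^ n : ℤ) ∣ finrank k (C.gr i) := by
    intro i
    obtain ⟨e⟩ := exists_basis_gr b hb i
    have := Module.Free.of_basis e
    rw [← finrank_mul_finrank k (GroupRing p n k) (C.gr i), finrank_groupRing]
    push_cast
    exact dvd_mul_right _ _
  have hbot : ∀ i ∉ S, C.gr i = ⊥ := fun i hi =>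
    gr_eq_bot b hb fun a ha => hi (ha ▸ hS a)
  have hbdy : ∀ i ∉ S, finrank k (C.bdy i) = 0 := fun i hi => by
    rw [show C.bdy i = ⊥ from le_bot_iff.1 (inf_le_left.trans (hbot i hi).le)]
    exact finrank_zero_of_subsingleton
  have hhom : ∀ i ∉ S, finrank k (C.Homology i) = 0 := fun i hi => by
    have : Subsingleton (C.cyc i) := by
      rw [show C.cyc i = ⊥ from le_bot_iff.1 (inf_le_left.trans (hbot i hi).le)]
      infer_instance
    exact finrank_zero_of_subsingleton
  let T := S ∪ S.image (· + 1)
  have hT : ∑ i ∈ T, (i.negOnePow : ℤ) * finrank k (C.Homology i) =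
      ∑ i ∈ S, (i.negOnePow : ℤ) * finrank k (C.Homology i) :=
    (sum_subset subset_union_left fun i _ hi => by simp [hhom i hi]).symm
  have hT₁ : ∑ i ∈ T, (i.negOnePow : ℤ) * finrank k (C.bdy i) =
      ∑ i ∈ S, (i.negOnePow : ℤ) * finrank k (C.bdy i) :=
    (sum_subset subset_union_left fun i _ hi => by simp [hbdy i hi]).symm
  have hT₂ : ∑ i ∈ T, (i.negOnePow : ℤ) * finrank k (C.bdy (i - 1)) =
      -∑ i ∈ S, (i.negOnePow : ℤ) * finrank k (C.bdy i) := by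
    rw [← sum_subset (s₁ := S.image (· + 1)) subset_union_right, sum_image (by simp),
      ← sum_neg_distrib]
    · refine sum_congr rfl fun i _ => ?_
      rw [Int.negOnePow_succ, add_sub_cancel_right]
      simp
    · intro i _ hi
      rw [hbdy (i - 1) fun h => hi (mem_image.2 ⟨_, h, by ring⟩)]
      simp
  have key : ∀ i, (finrank k (C.gr i) : ℤ) =
      finrank k (C.bdy i) + finrank k (C.Homology i) + finrank k (C.bdy (i - 1)) := fun i => by
    have h := finrank_gr b hb (i - 1)
    rw [sub_add_cancel, finrank_cyc] at h
    exact_mod_cast h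
  have hsum : ∑ i ∈ T, (i.negOnePow : ℤ) * finrank k (C.gr i) =
      ∑ i ∈ S, (i.negOnePow : ℤ) * finrank k (C.Homology i) := by
    simp only [key, mul_add, sum_add_distrib]
    rw [hT, hT₁, hT₂]
    ring
  rw [← hsum]
  exact dvd_sum fun i _ => (hgr i).mul_left _

section rankTwo
variable {p : ℕ} [Fact p.Prime] {C : KGCx p 2 (ZMod p) 2}

variable (p) in
/-- `HasReps` for the standard operators of `𝔽_p[(ℤ/p)²]`. -/
abbrev Reps (M : Type*) [AddCommGroup M] [Module (GroupRing p 2 (ZMod p)) M] :=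
  HasReps (gen p (ZMod p) (0 : Fin 2) - 1) (normElt p (ZMod p) (0 : Fin 2))
    (gen p (ZMod p) (1 : Fin 2) - 1) (normElt p (ZMod p) (1 : Fin 2)) M

variable (p) in
/-- `Vanishes` for the standard operators of `𝔽_p[(ℤ/p)²]`. -/
abbrev Van (M : Type*) [AddCommGroup M] [Module (GroupRing p 2 (ZMod p)) M] :=
  Vanishes (gen p (ZMod p) (0 : Fin 2) - 1) (normElt p (ZMod p) (0 : Fin 2))
    (gen p (ZMod p) (1 : Fin 2) - 1) (normElt p (ZMod p) (1 : Fin 2)) M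

theorem trivial_action_of_finrank_eq_one {i : ℤ}
    (hi : finrank (ZMod p) (C.Homology i) = 1) (v : C.Homology i) :
    (gen p (ZMod p) (0 : Fin 2) - 1) • v = 0 ∧ normElt p (ZMod p) (0 : Fin 2) • v = 0 ∧
      (gen p (ZMod p) (1 : Fin 2) - 1) • v = 0 ∧ normElt p (ZMod p) (1 : Fin 2) • v = 0 := by
  have hg := fun c : Fin 2 => gen_smul_of_finrank_eq_one (n := 2) hi c v
  simp only [sub_smul, one_smul, hg, sub_self, normElt_smul_of_gen_smul (hg _), and_self]

variable {ι : Type} [Finite ι] {deg : ι → ℤ} (b : Basis ι (GroupRing p 2 (ZMod p)) C.X)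
  (hb : ∀ a, b a ∈ C.gr (deg a))

include b hb

theorem van_gr (i : ℤ) (m : ℕ) : Van p (C.gr i) m := by
  obtain ⟨e⟩ := exists_basis_gr b hb i
  exact ((doublyExact_groupRing (by decide)).of_basis e).vanishes
    (gen_sub_one_mul_normElt _) (gen_sub_one_mul_normElt _) m

theorem reps_cyc_succ {i : ℤ} {m : ℕ} {T : Type*} (h : Reps p (C.bdy i) m T) :
    Reps p (C.cyc (i + 1)) (m + 1) T := by
  obtain ⟨q, hq, hex⟩ := exists_surjective_bdy b hb i
  exact h.connecting (gen_sub_one_mul_normElt _) (gen_sub_one_mul_normElt _)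
    (Submodule.inclusion_injective _) hq hex (van_gr b hb _ _)

theorem van_bdy {i : ℤ} {m : ℕ} (h : Van p (C.cyc (i + 1)) (m + 1)) : Van p (C.bdy i) m := by
  obtain ⟨q, hq, hex⟩ := exists_surjective_bdy b hb i
  exact vanishes_iff.2 ((vanishes_iff.1 (van_gr b hb (i + 1) m)).quotient
    (gen_sub_one_mul_normElt _) (gen_sub_one_mul_normElt _)
    (Submodule.inclusion_injective _) hq hex h)

variable [Module.Finite (ZMod p) C.X]

theorem van_cyc_of_acyclic_below {a : ℤ} (h : ∀ i < a, finrank (ZMod p) (C.Homology i) = 0) :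
    ∃ J, ∀ m, J ≤ m → Van p (C.cyc a) m := by
  obtain ⟨lo, hlo⟩ : ∃ lo : ℤ, ∀ e, lo ≤ deg e := by
    obtain ⟨lo, hlo⟩ := (Set.finite_range deg).bddBelow
    exact ⟨lo, fun e => hlo ⟨e, rfl⟩⟩
  have main : ∀ t : ℕ, ∀ i : ℤ, i ≤ a → i < lo + t → ∀ m, t ≤ m → Van p (C.cyc i) m := by
    intro t
    induction t with
    | zero =>
      intro i _ hi m _
      have : Subsingleton (C.cyc i) := by
        have hbot : C.gr i = ⊥ := gr_eq_bot b hb fun e he => by have := hlo e; omega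
        rw [show C.cyc i = ⊥ from le_bot_iff.1 (inf_le_left.trans hbot.le)]
        infer_instance
      exact vanishes_of_subsingleton m
    | succ t ih =>
      intro i hia hi m hm
      obtain ⟨i, rfl⟩ : ∃ l, i = l + 1 := ⟨i - 1, by ring⟩
      obtain ⟨m, rfl⟩ : ∃ l, m = l + 1 := ⟨m - 1, by omega⟩
      have hv := ih i (by omega) (by push_cast at hi; omega) m (by omega)
      rw [cyc_eq_bdy (h i (by omega))] at hv
      exact vanishes_iff.2 (reps_cyc_succ b hb (vanishes_iff.1 hv))
  refine ⟨(a - lo + 1).toNat, fun m hm => main _ a le_rfl (by omega) m hm⟩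

theorem van_bdy_of_acyclic_above {c : ℤ} (h : ∀ i, c < i → finrank (ZMod p) (C.Homology i) = 0)
    (m : ℕ) : Van p (C.bdy c) m := by
  obtain ⟨hi, hhi⟩ : ∃ hi : ℤ, ∀ e, deg e ≤ hi := by
    obtain ⟨hi, hhi⟩ := (Set.finite_range deg).bddAbove
    exact ⟨hi, fun e => hhi ⟨e, rfl⟩⟩
  have main : ∀ t : ℕ, ∀ i : ℤ, c ≤ i → hi < i + t → ∀ m, Van p (C.bdy i) m := by
    intro t
    induction t with
    | zero =>
      intro i _ hi m
      have : Subsingleton (C.bdy i) := by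
        have hbot : C.gr i = ⊥ := gr_eq_bot b hb fun e he => by have := hhi e; omega
        rw [show C.bdy i = ⊥ from le_bot_iff.1 (inf_le_left.trans hbot.le)]
        infer_instance
      exact vanishes_of_subsingleton m
    | succ t ih =>
      intro i hia hi m
      have hv := ih (i + 1) (by omega) (by push_cast at hi; omega) (m + 1)
      rw [← cyc_eq_bdy (h (i + 1) (by omega))] at hv
      exact van_bdy b hb hv
  exact main (hi - c + 1).toNat c le_rfl (by omega) m

theorem reps_cyc_of_acyclic_between {a c : ℤ} {m : ℕ} {T : Type*}
    (h : ∀ i, a < i → i < c → finrank (ZMod p) (C.Homology i) = 0) (start : Reps p (C.bdy a) m T)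
    (t : ℕ) (i : ℤ) (hi : i = a + t + 1) (hic : i ≤ c) : Reps p (C.cyc i) (m + t + 1) T := by
  induction t generalizing i with
  | zero =>
    obtain rfl : i = a + 1 := by simpa using hi
    exact reps_cyc_succ b hb start
  | succ t ih =>
    obtain rfl : i = (a + t + 1) + 1 := by push_cast at hi; omega
    have hr := ih _ rfl (by omega)
    rw [cyc_eq_bdy (h (a + t + 1) (by omega) (by omega))] at hr
    exact reps_cyc_succ b hb hr

theorem exists_reps_homology {a c : ℤ} (hac : a < c)
    (ha : finrank (ZMod p) (C.Homology a) = 1)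
    (h : ∀ i, i ≠ a → i ≠ c → finrank (ZMod p) (C.Homology i) = 0) :
    ∃ J t : ℕ, Reps p (C.Homology c) (J + 1 + t + 1) (Fin (J + 2) → C.Homology a) := by
  obtain ⟨J, hJ⟩ := van_cyc_of_acyclic_below b hb (a := a)
    fun i hi => h i (by omega) (by omega)
  have start : Reps p (C.bdy a) (J + 1) (Fin (J + 2) → C.Homology a) :=
    (hasReps_of_trivial (trivial_action_of_finrank_eq_one ha) J).connecting
      (gen_sub_one_mul_normElt _) (gen_sub_one_mul_normElt _)
      (Submodule.inclusion_injective _) (Submodule.mkQ_surjective _) (exact_homology a)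
      (hJ _ (by omega))
  obtain ⟨t, ht⟩ : ∃ t : ℕ, c = a + t + 1 := ⟨(c - a - 1).toNat, by omega⟩
  have top := reps_cyc_of_acyclic_between b hb
    (fun i h₁ h₂ => h i (by omega) (by omega)) start t c ht le_rfl
  exact ⟨J, t, top.quotient (gen_sub_one_mul_normElt _) (gen_sub_one_mul_normElt _)
    (Submodule.inclusion_injective _) (Submodule.mkQ_surjective _) (exact_homology c)
    (van_bdy_of_acyclic_above b hb (fun i hi => h i (by omega) (by omega)) _)⟩

/-- A perfect complex of rank two cannot have homology of total dimension two concentrated in two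
distinct degrees: the cohomology of `(ℤ/p)²` grows with the degree, so the iterated connecting maps
from `H_a` cannot be onto for `H_c`. -/
theorem false_of_two_homology {a c : ℤ} (hac : a < c)
    (ha : finrank (ZMod p) (C.Homology a) = 1) (hc : finrank (ZMod p) (C.Homology c) = 1)
    (h : ∀ i, i ≠ a → i ≠ c → finrank (ZMod p) (C.Homology i) = 0) : False := by
  obtain ⟨J, t, top⟩ := exists_reps_homology b hb hac ha h
  obtain ⟨s, hs⟩ := top.exists_surjective (trivial_action_of_finrank_eq_one hc)
  have card : ∀ i, finrank (ZMod p) (C.Homology i) = 1 →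
      Nat.card (C.Homology i) = p := fun i hi => by
    have := Module.finite_of_finrank_eq_succ hi
    rw [Module.natCard_eq_pow_finrank (K := ZMod p), hi, pow_one, Nat.card_zmod]
  have hp : 1 < p := (Fact.out : p.Prime).one_lt
  have : Finite (C.Homology a) := Nat.finite_of_card_ne_zero (by rw [card a ha]; omega)
  have hle := Nat.card_le_card_of_surjective s hs
  rw [Nat.card_fun, Nat.card_fun, card _ ha, card _ hc, Nat.card_fin, Nat.card_fin,
    Nat.pow_le_pow_iff_right hp] at hle
  omega

end rankTwo

end KGCx

/-- Nonnegative integers indexed by `ℤ`, with total in `(0, 2 ^ n)` for some `n ≤ 2` and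
alternating sum divisible by `p ^ n`: this forces `n = 2` and exactly two entries equal to `1`. -/
theorem Finset.exists_pair_of_dvd_alternating_sum {p n : ℕ} (hp : 2 ≤ p) (hn : n ≤ 2)
    (S : Finset ℤ) (h : ℤ → ℕ) (hdvd : (p ^ n : ℤ) ∣ ∑ i ∈ S, (i.negOnePow : ℤ) * h i)
    (hpos : 0 < ∑ i ∈ S, h i) (hlt : ∑ i ∈ S, h i < 2 ^ n) :
    n = 2 ∧ ∃ a c, a ≠ c ∧ h a = 1 ∧ h c = 1 ∧ ∀ i ∈ S, i ≠ a → i ≠ c → h i = 0 := by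
  have hsplit := Finset.sum_filter_add_sum_filter_not S Even h
  have hsigned : ∑ i ∈ S, (i.negOnePow : ℤ) * h i =
      ((∑ i ∈ S with Even i, h i : ℕ) : ℤ) - (∑ i ∈ S with ¬ Even i, h i : ℕ) := by
    rw [← Finset.sum_filter_add_sum_filter_not S Even, sub_eq_add_neg]
    push_cast
    rw [← Finset.sum_neg_distrib]
    congr 1
    · refine Finset.sum_congr rfl fun i hi => ?_
      rw [Int.negOnePow_even i (Finset.mem_filter.1 hi).2]
      simp
    · refine Finset.sum_congr rfl fun i hi => ?_
      rw [Int.negOnePow_odd i (by simpa using (Finset.mem_filter.1 hi).2)]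
      simp
  rw [hsigned] at hdvd
  have key : n = 2 ∧ ∑ i ∈ S with Even i, h i = 1 ∧ ∑ i ∈ S with ¬ Even i, h i = 1 := by
    generalize ∑ i ∈ S with Even i, h i = x at *
    generalize ∑ i ∈ S with ¬ Even i, h i = y at *
    rw [← hsplit] at hpos hlt
    have hpn : (2 ^ n : ℤ) ≤ p ^ n := by exact_mod_cast Nat.pow_le_pow_left hp n
    have hlt' : (x + y : ℤ) < 2 ^ n := by exact_mod_cast hlt
    have hzero := Int.eq_zero_of_abs_lt_dvd hdvd (by rw [abs_lt]; constructor <;> linarith)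
    interval_cases n <;> omega
  obtain ⟨rfl, heven, hodd⟩ := key
  obtain ⟨a, ha, ha1, ha0⟩ := Finset.exists_eq_one_of_sum_eq_one heven
  obtain ⟨c, hc, hc1, hc0⟩ := Finset.exists_eq_one_of_sum_eq_one hodd
  refine ⟨rfl, a, c, ?_, ha1, hc1, fun i hi hia hic => ?_⟩
  · rintro rfl
    exact (Finset.mem_filter.1 hc).2 (Finset.mem_filter.1 ha).2
  · by_cases hev : Even i
    · exact ha0 i (Finset.mem_filter.2 ⟨hi, hev⟩) hia
    · exact hc0 i (Finset.mem_filter.2 ⟨hi, hev⟩) hic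

theorem stmt_2 (p n : ℕ) [Fact p.Prime] (hn : n ≤ 2)
    (C : KGCx p n (ZMod p) 2) (hperf : C.IsPerfect) (hna : C.NonAcyclic) :
    2 ^ n ≤ Module.finrank (ZMod p) C.TotalHomology := by
  obtain ⟨ι, _, deg, b, hb⟩ := hperf
  have hfinR : Module.Finite (ZMod p) (GroupRing p n (ZMod p)) :=
    Module.Finite.equiv (AddMonoidAlgebra.coeffLinearEquiv (ZMod p)).symm
  have := Module.Finite.of_basis b
  have : Module.Finite (ZMod p) C.X := Module.Finite.trans (GroupRing p n (ZMod p)) C.X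
  have hS : ∀ a, deg a ∈ Finset.univ.image deg := fun a => by simp
  have hpos : 0 < Module.finrank (ZMod p) C.TotalHomology := by
    obtain ⟨x, hx, hx'⟩ := hna
    let z : LinearMap.ker C.dk := ⟨x, hx⟩
    have : Nontrivial C.TotalHomology := ⟨Submodule.Quotient.mk z, 0, fun h0 => by
      have h1 := (Submodule.Quotient.mk_eq_zero _).1 h0
      exact hx' h1⟩
    exact Module.finrank_pos
  by_contra! hlt
  rw [KGCx.finrank_totalHomology_eq_sum b hb hS] at hpos hlt
  obtain ⟨rfl, a, c, hne, ha, hc, hoff⟩ := Finset.exists_pair_of_dvd_alternating_sum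
    (Fact.out : p.Prime).two_le hn _ _ (KGCx.dvd_sum_homology b hb hS) hpos hlt
  have hoff : ∀ i, i ≠ a → i ≠ c → Module.finrank (ZMod p) (C.Homology i) = 0 := by
    intro i hia hic
    by_cases hi : i ∈ Finset.univ.image deg
    · exact hoff i hi hia hic
    · have hsub : Subsingleton (C.cyc i) := by
        have hbot : C.gr i = ⊥ := KGCx.gr_eq_bot b hb fun e he => hi (he ▸ hS e)
        rw [show C.cyc i = ⊥ from le_bot_iff.1 (inf_le_left.trans hbot.le)]
        infer_instance
      exact Module.finrank_zero_of_subsingleton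
  rcases lt_or_gt_of_ne hne with hac | hac
  · exact KGCx.false_of_two_homology b hb hac ha hc hoff
  · exact KGCx.false_of_two_homology b hb hac hc ha fun i h1 h2 => hoff i h2 h1
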